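/- Let K ⊂ ℝ^d be a compact set, let F : P_2(K) → ℝ be lower semicontinuous and strictly convex, let τ > 0, and let μ_k ∈ P_2(K). Then the functional μ ↦ SW_2²(μ, μ_k)/(2τ) + F(μ) has a unique minimizer over P_2(K). -/

import Mathlib

open MeasureTheory ENNReal Metric Filter
open scoped RealInnerProductSpace NNReal

noncomputable section

/-- `ℝ^d` as a Euclidean space. -/
abbrev Ed (d : ℕ) : Type := EuclideanSpace ℝ (Fin d)

/-- `π` is a coupling of `μ` and `ν`. -/
def IsCoupling {E : Type*} [MeasurableSpace E] (π : Measure (E × E)) (μ ν : Measure E) : Prop :=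
  π.map Prod.fst = μ ∧ π.map Prod.snd = ν

/-- Squared 2-Wasserstein distance. -/
def W2sq {E : Type*} [MeasurableSpace E] [NormedAddCommGroup E] (μ ν : Measure E) : ℝ≥0∞ :=
  ⨅ (π : Measure (E × E)) (_ : IsCoupling π μ ν), ∫⁻ p, (‖p.1 - p.2‖₊ : ℝ≥0∞) ^ 2 ∂π

/-- The uniform probability measure on the unit sphere `S^{d-1}`. -/
def unifSphere (d : ℕ) : Measure (sphere (0 : Ed d) 1) :=
  ((volume : Measure (Ed d)).toSphere Set.univ)⁻¹ • (volume : Measure (Ed d)).toSphere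

/-- Projection `P^θ(x) = ⟨x, θ⟩`. -/
def proj {d : ℕ} (θ : Ed d) (x : Ed d) : ℝ := ⟪x, θ⟫

/-- Squared Sliced-Wasserstein distance. -/
def SW2sq {d : ℕ} (μ ν : Measure (Ed d)) : ℝ≥0∞ :=
  ∫⁻ θ : sphere (0 : Ed d) 1,
    W2sq (μ.map (proj (θ : Ed d))) (ν.map (proj (θ : Ed d))) ∂(unifSphere d)

/-- Sliced-Wasserstein distance. -/
def SW2 {d : ℕ} (μ ν : Measure (Ed d)) : ℝ := Real.sqrt (SW2sq μ ν).toReal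

/-- Finite second moment. -/
def FiniteSecondMoment {d : ℕ} (μ : Measure (Ed d)) : Prop :=
  ∫⁻ x, (‖x‖₊ : ℝ≥0∞) ^ 2 ∂μ < ∞

/-- `μ ∈ P_2(K)`: probability measure supported in `K` with finite second moment. -/
def MemP2 {d : ℕ} (K : Set (Ed d)) (μ : Measure (Ed d)) : Prop :=
  IsProbabilityMeasure μ ∧ μ Kᶜ = 0 ∧ FiniteSecondMoment μ

/-!
`W₂²` is the infimum of the lower semicontinuous transport cost over the fibres of the map sending a
plan to its marginals. By the two directions of Prokhorov's theorem this map is proper, so `W₂²` is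
jointly lower semicontinuous for weak convergence, with no restriction on supports. In particular
the sliced distances depend measurably on the direction `θ`, and Fatou's lemma carries lower
semicontinuity over to `SW₂²`. Mixing couplings shows that `W₂²`, hence `SW₂²`, is convex along
mixtures. On the weakly compact set `P₂(K)` the objective is thus lower semicontinuous, which gives
a minimizer, and strictly convex, which makes it unique.
-/

theorem lowerSemicontinuous_iInf_fiber {X Y γ : Type*} [TopologicalSpace X] [TopologicalSpace Y]
    [CompleteLinearOrder γ] [DenselyOrdered γ] {m : X → Y} (hm : IsClosedMap m) {c : X → γ}
    (hc : LowerSemicontinuous c) :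
    LowerSemicontinuous fun y ↦ ⨅ (x) (_ : m x = y), c x := by
  intro y a ha
  obtain ⟨b, hab, hb⟩ := exists_between ha
  have hclosed : IsClosed (m '' (c ⁻¹' Set.Iic b)) := hm _ (hc.isClosed_preimage b)
  have hy : y ∉ m '' (c ⁻¹' Set.Iic b) := by
    rintro ⟨x, hx, hxy⟩
    exact (hb.trans_le ((iInf₂_le x hxy).trans hx)).false
  filter_upwards [hclosed.isOpen_compl.mem_nhds hy] with z hz
  refine hab.trans_le (le_iInf₂ fun x hx ↦ ?_)
  exact (not_le.1 fun hxb ↦ hz ⟨x, hxb, hx⟩).le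

theorem lowerSemicontinuousOn_toReal {X : Type*} [TopologicalSpace X] {f : X → ℝ≥0∞} {s : Set X}
    (hf : LowerSemicontinuousOn f s) (hfin : ∀ x ∈ s, f x ≠ ∞) :
    LowerSemicontinuousOn (fun x ↦ (f x).toReal) s := by
  intro x hx a ha
  rcases lt_or_ge a 0 with hneg | hnonneg
  · exact Eventually.of_forall fun y ↦ hneg.trans_le toReal_nonneg
  · filter_upwards [hf x hx _ ((ofReal_lt_iff_lt_toReal hnonneg (hfin x hx)).2 ha),
      self_mem_nhdsWithin] with y hay hy
    exact (ofReal_lt_iff_lt_toReal hnonneg (hfin y hy)).1 hay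

section WeakConvergence

variable {X Y : Type*} [MeasurableSpace X] [MeasurableSpace Y]

theorem isCompact_setOf_measure_compl_eq_zero [TopologicalSpace X] [T2Space X] [NormalSpace X]
    [BorelSpace X] {K : Set X} (hK : IsCompact K) :
    IsCompact {μ : ProbabilityMeasure X | (μ : Measure X) Kᶜ = 0} := by
  have h := isCompact_setOfPred_probabilityMeasure_mass_eq_compl_isCompact_le
    (u := fun _ ↦ 0) (K := fun _ ↦ K) tendsto_const_nhds (fun _ ↦ hK) (.inl inferInstance)
  simpa [ProbabilityMeasure.null_iff_toMeasure_null] using h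

theorem lowerSemicontinuous_lintegral_of_continuous [TopologicalSpace X] [OpensMeasurableSpace X]
    {f : X → ℝ≥0} (hf : Continuous f) :
    LowerSemicontinuous fun μ : ProbabilityMeasure X ↦ ∫⁻ x, f x ∂(μ : Measure X) := by
  let trunc (n : ℕ) : BoundedContinuousFunction X ℝ≥0 :=
    .mkOfBound ⟨fun x ↦ min (f x) n, by fun_prop⟩ n fun x y ↦ by
      rw [NNReal.dist_eq]
      have hx : ((min (f x) n : ℝ≥0) : ℝ) ≤ n := mod_cast min_le_right (f x) n
      have hy : ((min (f y) n : ℝ≥0) : ℝ) ≤ n := mod_cast min_le_right (f y) n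
      exact abs_sub_le_of_nonneg_of_le (NNReal.coe_nonneg _) hx (NNReal.coe_nonneg _) hy
  have hmono : Monotone fun n x ↦ (trunc n x : ℝ≥0∞) := fun m n hmn x ↦
    coe_le_coe.2 (min_le_min_left _ (mod_cast hmn))
  have hsup (x : X) : ⨆ n, (trunc n x : ℝ≥0∞) = f x := by
    refine le_antisymm (iSup_le fun n ↦ coe_le_coe.2 (min_le_left _ _)) ?_
    obtain ⟨n, hn⟩ := exists_nat_ge (f x)
    exact le_iSup_of_le n (coe_le_coe.2 (le_min le_rfl hn))
  have hlint (μ : ProbabilityMeasure X) :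
      ∫⁻ x, f x ∂(μ : Measure X) = ⨆ n, ∫⁻ x, trunc n x ∂(μ : Measure X) := by
    rw [← lintegral_iSup (fun n ↦ (trunc n).continuous.measurable.coe_nnreal_ennreal) hmono]
    simp only [hsup]
  simp only [hlint]
  refine lowerSemicontinuous_iSup fun n ↦ Continuous.lowerSemicontinuous ?_
  exact ProbabilityMeasure.continuous_lintegral_boundedContinuousFunction (trunc n)

theorem continuous_map_of_continuous_uncurry {Θ : Type*} [TopologicalSpace Θ]
    [FirstCountableTopology Θ] [TopologicalSpace X] [TopologicalSpace Y] [OpensMeasurableSpace X]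
    [BorelSpace Y] {f : Θ → X → Y} (hf : Continuous (Function.uncurry f))
    (μ : ProbabilityMeasure X) :
    Continuous fun θ ↦ μ.map (hf.uncurry_left θ).measurable.aemeasurable := by
  rw [ProbabilityMeasure.continuous_iff_forall_continuous_integral]
  intro g
  have hmap (θ : Θ) :
      ∫ y, g y ∂(μ.map (hf.uncurry_left θ).measurable.aemeasurable : Measure Y) =
        ∫ x, g (f θ x) ∂(μ : Measure X) :=
    integral_map (hf.uncurry_left θ).measurable.aemeasurable
      g.continuous.aestronglyMeasurable
  simp only [hmap]
  refine continuous_of_dominated (bound := fun _ ↦ ‖g‖)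
    (fun θ ↦ (g.continuous.comp (hf.uncurry_left θ)).aestronglyMeasurable)
    (fun θ ↦ .of_forall fun x ↦ g.norm_coe_le_norm _) (integrable_const _)
    (.of_forall fun x ↦ g.continuous.comp (hf.uncurry_right x))

/-- The pair of marginals of a probability measure on a product space. -/
def marginals (π : ProbabilityMeasure (X × Y)) : ProbabilityMeasure X × ProbabilityMeasure Y :=
  (π.map measurable_fst.aemeasurable, π.map measurable_snd.aemeasurable)

theorem continuous_marginals [TopologicalSpace X] [TopologicalSpace Y]
    [SecondCountableTopologyEither X Y] [BorelSpace X] [BorelSpace Y] :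
    Continuous (marginals (X := X) (Y := Y)) :=
  (ProbabilityMeasure.continuous_map continuous_fst).prodMk
    (ProbabilityMeasure.continuous_map continuous_snd)

theorem isProperMap_marginals [MetricSpace X] [SecondCountableTopology X] [CompleteSpace X]
    [BorelSpace X] [MetricSpace Y] [SecondCountableTopology Y] [CompleteSpace Y] [BorelSpace Y] :
    IsProperMap (marginals (X := X) (Y := Y)) := by
  refine isProperMap_iff_isCompact_preimage.2 ⟨continuous_marginals, fun C hC ↦ ?_⟩
  have hclosed : IsClosed (marginals ⁻¹' C) := hC.isClosed.preimage continuous_marginals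
  have htight₁ := isTightMeasureSet_of_isCompact_closure
    (S := Prod.fst '' C) (hC.image continuous_fst).closure
  have htight₂ := isTightMeasureSet_of_isCompact_closure
    (S := Prod.snd '' C) (hC.image continuous_snd).closure
  rw [← hclosed.closure_eq]
  refine isCompact_closure_of_isTightMeasureSet (.prodMk (htight₁.subset ?_) (htight₂.subset ?_))
  · rintro _ ⟨_, ⟨π, hπ, rfl⟩, rfl⟩
    exact ⟨_, ⟨_, hπ, rfl⟩, rfl⟩
  · rintro _ ⟨_, ⟨π, hπ, rfl⟩, rfl⟩
    exact ⟨_, ⟨_, hπ, rfl⟩, rfl⟩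

end WeakConvergence

section Wasserstein

variable {E : Type*} [MeasurableSpace E]

theorem isCoupling_prod (μ ν : Measure E) [IsProbabilityMeasure μ] [IsProbabilityMeasure ν] :
    IsCoupling (μ.prod ν) μ ν :=
  ⟨Measure.fst_prod, Measure.snd_prod⟩

theorem IsCoupling.isProbabilityMeasure {π : Measure (E × E)} {μ ν : Measure E}
    [IsProbabilityMeasure μ] (h : IsCoupling π μ ν) : IsProbabilityMeasure π := by
  have : IsProbabilityMeasure (π.map Prod.fst) := h.1 ▸ inferInstance
  exact Measure.isProbabilityMeasure_of_map Prod.fst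

theorem IsCoupling.add {π π' : Measure (E × E)} {μ μ' ν ν' : Measure E} (h : IsCoupling π μ ν)
    (h' : IsCoupling π' μ' ν') : IsCoupling (π + π') (μ + μ') (ν + ν') :=
  ⟨by rw [Measure.map_add _ _ measurable_fst, h.1, h'.1],
    by rw [Measure.map_add _ _ measurable_snd, h.2, h'.2]⟩

theorem IsCoupling.smul {π : Measure (E × E)} {μ ν : Measure E} (h : IsCoupling π μ ν)
    (a : ℝ≥0) : IsCoupling (a • π) (a • μ) (a • ν) :=
  ⟨by rw [Measure.map_smul, h.1], by rw [Measure.map_smul, h.2]⟩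

variable [NormedAddCommGroup E]

theorem IsCoupling.W2sq_le {π : Measure (E × E)} {μ ν : Measure E} (h : IsCoupling π μ ν) :
    W2sq μ ν ≤ ∫⁻ p, (‖p.1 - p.2‖₊ : ℝ≥0∞) ^ 2 ∂π :=
  iInf₂_le π h

theorem W2sq_add_le (μ μ' ν ν' : Measure E) :
    W2sq (μ + μ') (ν + ν') ≤ W2sq μ ν + W2sq μ' ν' := by
  simp only [W2sq, iInf_subtype', ENNReal.iInf_add, ENNReal.add_iInf]
  refine le_iInf₂ fun π' π ↦ ?_
  simpa only [W2sq, iInf_subtype', lintegral_add_measure] using (π.2.add π'.2).W2sq_le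

theorem W2sq_smul_le (a : ℝ≥0) (μ ν : Measure E) :
    W2sq (a • μ) (a • ν) ≤ a * W2sq μ ν := by
  rcases eq_or_ne a 0 with rfl | ha
  · have hzero : IsCoupling (0 : Measure (E × E)) 0 0 := ⟨Measure.map_zero _, Measure.map_zero _⟩
    simpa using hzero.W2sq_le
  · simp only [W2sq, iInf_subtype', ENNReal.mul_iInf_of_ne (coe_ne_zero.2 ha) coe_ne_top]
    refine le_iInf fun π ↦ ?_
    simpa only [W2sq, iInf_subtype', lintegral_smul_measure, ENNReal.smul_def, smul_eq_mul]
      using (π.2.smul a).W2sq_le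

theorem W2sq_smul_add_smul_le (a b : ℝ≥0) (μ μ' ν ν' : Measure E) :
    W2sq (a • μ + b • μ') (a • ν + b • ν') ≤ a * W2sq μ ν + b * W2sq μ' ν' :=
  (W2sq_add_le _ _ _ _).trans (add_le_add (W2sq_smul_le a μ ν) (W2sq_smul_le b μ' ν'))

theorem W2sq_le_two_mul_add_secondMoments [OpensMeasurableSpace E] (μ ν : Measure E)
    [IsProbabilityMeasure μ] [IsProbabilityMeasure ν] :
    W2sq μ ν ≤ 2 * (∫⁻ x, (‖x‖₊ : ℝ≥0∞) ^ 2 ∂μ + ∫⁻ y, (‖y‖₊ : ℝ≥0∞) ^ 2 ∂ν) := by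
  have hnorm : Measurable fun x : E ↦ (‖x‖₊ : ℝ≥0∞) ^ 2 := by fun_prop
  have hcost (p : E × E) : (‖p.1 - p.2‖₊ : ℝ≥0∞) ^ 2 ≤
      2 * ((‖p.1‖₊ : ℝ≥0∞) ^ 2 + (‖p.2‖₊ : ℝ≥0∞) ^ 2) := by
    have h : ‖p.1 - p.2‖₊ ^ 2 ≤ 2 * (‖p.1‖₊ ^ 2 + ‖p.2‖₊ ^ 2) :=
      (pow_le_pow_left₀ zero_le (nnnorm_sub_le p.1 p.2) 2).trans add_sq_le
    exact_mod_cast h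
  calc W2sq μ ν
      ≤ ∫⁻ p, (‖p.1 - p.2‖₊ : ℝ≥0∞) ^ 2 ∂(μ.prod ν) := (isCoupling_prod μ ν).W2sq_le
    _ ≤ ∫⁻ p, 2 * ((‖p.1‖₊ : ℝ≥0∞) ^ 2 + (‖p.2‖₊ : ℝ≥0∞) ^ 2) ∂(μ.prod ν) := lintegral_mono hcost
    _ = 2 * (∫⁻ p, (‖p.1‖₊ : ℝ≥0∞) ^ 2 ∂(μ.prod ν) + ∫⁻ p, (‖p.2‖₊ : ℝ≥0∞) ^ 2 ∂(μ.prod ν)) := by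
      rw [lintegral_const_mul' _ _ ofNat_ne_top, lintegral_add_left (by fun_prop)]
    _ = 2 * (∫⁻ x, (‖x‖₊ : ℝ≥0∞) ^ 2 ∂μ + ∫⁻ y, (‖y‖₊ : ℝ≥0∞) ^ 2 ∂ν) := by
      rw [← lintegral_map hnorm measurable_fst, ← lintegral_map hnorm measurable_snd,
        (isCoupling_prod μ ν).1, (isCoupling_prod μ ν).2]

theorem W2sq_eq_iInf_marginals (μ ν : ProbabilityMeasure E) :
    W2sq (μ : Measure E) ν = ⨅ (π : ProbabilityMeasure (E × E)) (_ : marginals π = (μ, ν)),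
      ∫⁻ p, (‖p.1 - p.2‖₊ : ℝ≥0∞) ^ 2 ∂(π : Measure (E × E)) := by
  apply le_antisymm
  · refine le_iInf₂ fun π hπ ↦ IsCoupling.W2sq_le ⟨?_, ?_⟩
    · exact congrArg (fun q ↦ (q.1 : Measure E)) hπ
    · exact congrArg (fun q ↦ (q.2 : Measure E)) hπ
  · refine le_iInf₂ fun π hπ ↦ ?_
    exact iInf₂_le (⟨π, hπ.isProbabilityMeasure⟩ : ProbabilityMeasure (E × E))
      (Prod.ext (Subtype.ext hπ.1) (Subtype.ext hπ.2))

theorem lowerSemicontinuous_W2sq [SecondCountableTopology E] [CompleteSpace E] [BorelSpace E] :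
    LowerSemicontinuous fun p : ProbabilityMeasure E × ProbabilityMeasure E ↦
      W2sq (p.1 : Measure E) p.2 := by
  have hcost : Continuous fun p : E × E ↦ ‖p.1 - p.2‖₊ ^ 2 := by fun_prop
  have h := lowerSemicontinuous_iInf_fiber isProperMap_marginals.isClosedMap
    (lowerSemicontinuous_lintegral_of_continuous hcost)
  simpa only [W2sq_eq_iInf_marginals, ENNReal.coe_pow] using h

end Wasserstein

section SlicedWasserstein

variable {d : ℕ}

theorem continuous_uncurry_proj : Continuous (Function.uncurry (proj (d := d))) :=
  continuous_snd.inner continuous_fst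

theorem continuous_proj (θ : Ed d) : Continuous (proj θ) :=
  continuous_uncurry_proj.uncurry_left θ

/-- The one-dimensional slice `P^θ_# μ` as a probability measure, so that the topology of weak
convergence is available. -/
def slice (θ : Ed d) (μ : ProbabilityMeasure (Ed d)) : ProbabilityMeasure ℝ :=
  μ.map (continuous_proj θ).measurable.aemeasurable

theorem continuous_slice (θ : Ed d) : Continuous (slice θ) :=
  ProbabilityMeasure.continuous_map (continuous_proj θ)

theorem continuous_slice_direction (μ : ProbabilityMeasure (Ed d)) :
    Continuous fun θ ↦ slice θ μ :=
  continuous_map_of_continuous_uncurry continuous_uncurry_proj μ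

theorem SW2sq_eq_lintegral_slice (μ ν : ProbabilityMeasure (Ed d)) :
    SW2sq (μ : Measure (Ed d)) ν =
      ∫⁻ θ : sphere (0 : Ed d) 1, W2sq (slice θ μ : Measure ℝ) (slice θ ν) ∂(unifSphere d) :=
  rfl

theorem measurable_W2sq_slice (μ ν : ProbabilityMeasure (Ed d)) :
    Measurable fun θ : sphere (0 : Ed d) 1 ↦ W2sq (slice θ μ : Measure ℝ) (slice θ ν) := by
  have hslices : Continuous fun θ : sphere (0 : Ed d) 1 ↦ (slice θ μ, slice θ ν) :=
    ((continuous_slice_direction μ).prodMk (continuous_slice_direction ν)).comp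
      continuous_subtype_val
  exact (lowerSemicontinuous_W2sq.comp hslices).measurable

theorem lowerSemicontinuous_SW2sq :
    LowerSemicontinuous fun p : ProbabilityMeasure (Ed d) × ProbabilityMeasure (Ed d) ↦
      SW2sq (p.1 : Measure (Ed d)) p.2 := by
  rw [lowerSemicontinuous_iff_le_liminf]
  intro p
  simp only [SW2sq_eq_lintegral_slice]
  refine le_trans (lintegral_mono fun θ ↦ ?_)
    (lintegral_liminf_le fun q ↦ measurable_W2sq_slice q.1 q.2)
  have hslices : Continuous (Prod.map (slice θ.1) (slice θ.1)) :=
    (continuous_slice θ.1).prodMap (continuous_slice θ.1)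
  exact (lowerSemicontinuous_W2sq.comp hslices).le_liminf p

theorem SW2sq_smul_add_smul_le (a b : ℝ≥0) (μ μ' ν ν' : ProbabilityMeasure (Ed d)) :
    SW2sq (a • (μ : Measure (Ed d)) + b • (μ' : Measure (Ed d)))
        (a • (ν : Measure (Ed d)) + b • (ν' : Measure (Ed d))) ≤
      a * SW2sq (μ : Measure (Ed d)) ν + b * SW2sq (μ' : Measure (Ed d)) ν' := by
  rw [SW2sq_eq_lintegral_slice, SW2sq_eq_lintegral_slice,
    ← lintegral_const_mul' _ _ coe_ne_top, ← lintegral_const_mul' _ _ coe_ne_top,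
    ← lintegral_add_left ((measurable_W2sq_slice μ ν).const_mul _)]
  refine lintegral_mono fun θ ↦ ?_
  simp only [Measure.map_add _ _ (continuous_proj θ.1).measurable, Measure.map_smul]
  exact W2sq_smul_add_smul_le a b _ _ _ _

theorem unifSphere_univ_le_one (d : ℕ) : unifSphere d Set.univ ≤ 1 :=
  ENNReal.inv_mul_le_one _

theorem secondMoment_slice_le {θ : Ed d} (hθ : ‖θ‖ ≤ 1) (μ : ProbabilityMeasure (Ed d)) :
    ∫⁻ y, (‖y‖₊ : ℝ≥0∞) ^ 2 ∂(slice θ μ : Measure ℝ) ≤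
      ∫⁻ x, (‖x‖₊ : ℝ≥0∞) ^ 2 ∂(μ : Measure (Ed d)) := by
  have hproj (x : Ed d) : ‖proj θ x‖₊ ≤ ‖x‖₊ :=
    (norm_inner_le_norm x θ).trans (mul_le_of_le_one_right (norm_nonneg x) hθ)
  calc ∫⁻ y, (‖y‖₊ : ℝ≥0∞) ^ 2 ∂(slice θ μ : Measure ℝ)
      = ∫⁻ x, (‖proj θ x‖₊ : ℝ≥0∞) ^ 2 ∂(μ : Measure (Ed d)) :=
        lintegral_map (by fun_prop) (continuous_proj θ).measurable
    _ ≤ ∫⁻ x, (‖x‖₊ : ℝ≥0∞) ^ 2 ∂(μ : Measure (Ed d)) := by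
        gcongr with x
        exact hproj x

theorem SW2sq_le_two_mul_add_secondMoments (μ ν : ProbabilityMeasure (Ed d)) :
    SW2sq (μ : Measure (Ed d)) ν ≤ 2 * (∫⁻ x, (‖x‖₊ : ℝ≥0∞) ^ 2 ∂(μ : Measure (Ed d)) +
      ∫⁻ y, (‖y‖₊ : ℝ≥0∞) ^ 2 ∂(ν : Measure (Ed d))) := by
  set C := 2 * (∫⁻ x, (‖x‖₊ : ℝ≥0∞) ^ 2 ∂(μ : Measure (Ed d)) +
    ∫⁻ y, (‖y‖₊ : ℝ≥0∞) ^ 2 ∂(ν : Measure (Ed d)))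
  have hslice (θ : sphere (0 : Ed d) 1) : W2sq (slice θ μ : Measure ℝ) (slice θ ν) ≤ C := by
    have hθ : ‖(θ : Ed d)‖ ≤ 1 := (norm_eq_of_mem_sphere θ).le
    exact (W2sq_le_two_mul_add_secondMoments _ _).trans <| mul_le_mul_right
      (add_le_add (secondMoment_slice_le hθ μ) (secondMoment_slice_le hθ ν)) 2
  calc SW2sq (μ : Measure (Ed d)) ν
      ≤ ∫⁻ _, C ∂(unifSphere d) := lintegral_mono hslice
    _ = C * unifSphere d Set.univ := lintegral_const C
    _ ≤ C := mul_le_of_le_one_right' (unifSphere_univ_le_one d)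

theorem SW2sq_ne_top {μ ν : ProbabilityMeasure (Ed d)}
    (hμ : FiniteSecondMoment (μ : Measure (Ed d))) (hν : FiniteSecondMoment (ν : Measure (Ed d))) :
    SW2sq (μ : Measure (Ed d)) ν ≠ ∞ :=
  ne_top_of_le_ne_top (mul_ne_top ofNat_ne_top (add_ne_top.2 ⟨hμ.ne, hν.ne⟩))
    (SW2sq_le_two_mul_add_secondMoments μ ν)

end SlicedWasserstein

section Mixtures

variable {E : Type*} [MeasurableSpace E] {s : Set (ProbabilityMeasure E)}
  {F G : ProbabilityMeasure E → ℝ}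

/-- The set `s` is convex, in the sense that it contains all mixtures of its elements. Mixtures are
expressed as equalities of measures because `ProbabilityMeasure E` carries no linear structure. -/
def ClosedUnderMixtures (s : Set (ProbabilityMeasure E)) : Prop :=
  ∀ t : ℝ≥0, 0 < t → t < 1 → ∀ μ ∈ s, ∀ ν ∈ s, ∀ σ : ProbabilityMeasure E,
    (σ : Measure E) = t • (μ : Measure E) + (1 - t) • (ν : Measure E) → σ ∈ s

/-- Convexity of `F` along mixtures of elements of `s`. -/
def ConvexOnMixtures (s : Set (ProbabilityMeasure E)) (F : ProbabilityMeasure E → ℝ) : Prop :=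
  ∀ t : ℝ≥0, 0 < t → t < 1 → ∀ μ ∈ s, ∀ ν ∈ s, ∀ σ : ProbabilityMeasure E,
    (σ : Measure E) = t • (μ : Measure E) + (1 - t) • (ν : Measure E) →
      F σ ≤ (t : ℝ) * F μ + (1 - (t : ℝ)) * F ν

/-- Strict convexity of `F` along mixtures of distinct elements of `s`. -/
def StrictConvexOnMixtures (s : Set (ProbabilityMeasure E)) (F : ProbabilityMeasure E → ℝ) :
    Prop :=
  ∀ t : ℝ≥0, 0 < t → t < 1 → ∀ μ ∈ s, ∀ ν ∈ s, ∀ σ : ProbabilityMeasure E, μ ≠ ν →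
    (σ : Measure E) = t • (μ : Measure E) + (1 - t) • (ν : Measure E) →
      F σ < (t : ℝ) * F μ + (1 - (t : ℝ)) * F ν

theorem ConvexOnMixtures.mono {s' : Set (ProbabilityMeasure E)} (hG : ConvexOnMixtures s G)
    (hs : s' ⊆ s) : ConvexOnMixtures s' G :=
  fun t ht₀ ht₁ μ hμ ν hν ↦ hG t ht₀ ht₁ μ (hs hμ) ν (hs hν)

theorem ConvexOnMixtures.div_const (hG : ConvexOnMixtures s G) {c : ℝ} (hc : 0 ≤ c) :
    ConvexOnMixtures s fun μ ↦ G μ / c := by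
  intro t ht₀ ht₁ μ hμ ν hν σ hσ
  calc G σ / c ≤ (t * G μ + (1 - t) * G ν) / c := by
        gcongr
        exact hG t ht₀ ht₁ μ hμ ν hν σ hσ
    _ = t * (G μ / c) + (1 - t) * (G ν / c) := by ring

theorem ConvexOnMixtures.add_strictConvexOnMixtures (hG : ConvexOnMixtures s G)
    (hF : StrictConvexOnMixtures s F) : StrictConvexOnMixtures s fun μ ↦ G μ + F μ := by
  intro t ht₀ ht₁ μ hμ ν hν σ hne hσ
  linarith [hG t ht₀ ht₁ μ hμ ν hν σ hσ, hF t ht₀ ht₁ μ hμ ν hν σ hne hσ]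

theorem exists_eq_mixture {t : ℝ≥0} (ht : t ≤ 1) (μ ν : ProbabilityMeasure E) :
    ∃ σ : ProbabilityMeasure E,
      (σ : Measure E) = t • (μ : Measure E) + (1 - t) • (ν : Measure E) := by
  refine ⟨⟨t • (μ : Measure E) + (1 - t) • (ν : Measure E), ⟨?_⟩⟩, rfl⟩
  simp only [Measure.add_apply, Measure.smul_apply, measure_univ, ENNReal.smul_def, smul_eq_mul,
    mul_one]
  rw [← ENNReal.coe_add, add_tsub_cancel_of_le ht, ENNReal.coe_one]

theorem StrictConvexOnMixtures.eq_of_isMinOn (hF : StrictConvexOnMixtures s F)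
    (hs : ClosedUnderMixtures s) {μ ν : ProbabilityMeasure E} (hμ : μ ∈ s) (hν : ν ∈ s)
    (hμmin : IsMinOn F s μ) (hνmin : IsMinOn F s ν) : μ = ν := by
  by_contra hne
  have ht₀ : (0 : ℝ≥0) < 2⁻¹ := by positivity
  have ht₁ : (2⁻¹ : ℝ≥0) < 1 := inv_lt_one_of_one_lt₀ one_lt_two
  obtain ⟨σ, hσ⟩ := exists_eq_mixture ht₁.le μ ν
  have hσs : σ ∈ s := hs _ ht₀ ht₁ μ hμ ν hν σ hσ
  have hlt := hF _ ht₀ ht₁ μ hμ ν hν σ hne hσ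
  have hμσ : F μ ≤ F σ := hμmin hσs
  have hνσ : F ν ≤ F σ := hνmin hσs
  push_cast at hlt
  linarith

theorem StrictConvexOnMixtures.existsUnique_isMinOn [TopologicalSpace E] [OpensMeasurableSpace E]
    (hF : StrictConvexOnMixtures s F) (hs : ClosedUnderMixtures s) (hcompact : IsCompact s)
    (hne : s.Nonempty) (hlsc : LowerSemicontinuousOn F s) : ∃! μ, μ ∈ s ∧ IsMinOn F s μ := by
  obtain ⟨μ, hμ, hμmin⟩ := hlsc.exists_isMinOn hne hcompact
  exact ⟨μ, ⟨hμ, hμmin⟩, fun ν hν ↦ hF.eq_of_isMinOn hs hν.1 hμ hν.2 hμmin⟩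

end Mixtures

section MemP2

variable {d : ℕ} {K : Set (Ed d)}

theorem memP2_iff_measure_compl_eq_zero (hK : Bornology.IsBounded K)
    (μ : ProbabilityMeasure (Ed d)) :
    MemP2 K (μ : Measure (Ed d)) ↔ (μ : Measure (Ed d)) Kᶜ = 0 := by
  refine ⟨fun h ↦ h.2.1, fun h ↦ ⟨inferInstance, h, ?_⟩⟩
  obtain ⟨R, hR⟩ := hK.exists_norm_le
  have hbound : ∀ᵐ x ∂(μ : Measure (Ed d)), (‖x‖₊ : ℝ≥0∞) ^ 2 ≤ (R.toNNReal : ℝ≥0∞) ^ 2 := by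
    filter_upwards [(h : ∀ᵐ x ∂(μ : Measure (Ed d)), x ∈ K)] with x hx
    gcongr
    exact NNReal.le_toNNReal_of_coe_le (hR x hx)
  refine (lintegral_mono_ae hbound).trans_lt ?_
  simp

theorem isCompact_setOf_memP2 (hK : IsCompact K) :
    IsCompact {μ : ProbabilityMeasure (Ed d) | MemP2 K (μ : Measure (Ed d))} := by
  simpa only [memP2_iff_measure_compl_eq_zero hK.isBounded]
    using isCompact_setOf_measure_compl_eq_zero hK

theorem closedUnderMixtures_setOf_memP2 (K : Set (Ed d)) :
    ClosedUnderMixtures {μ : ProbabilityMeasure (Ed d) | MemP2 K (μ : Measure (Ed d))} := by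
  rintro t - - μ ⟨-, hμK, hμ⟩ ν ⟨-, hνK, hν⟩ σ hσ
  refine ⟨inferInstance, by simp [hσ, hμK, hνK], ?_⟩
  rw [FiniteSecondMoment, hσ, lintegral_add_measure, lintegral_smul_measure,
    lintegral_smul_measure]
  exact add_lt_top.2 ⟨mul_lt_top coe_lt_top hμ, mul_lt_top coe_lt_top hν⟩

theorem setOf_memP2_nonempty (hK : K.Nonempty) :
    {μ : ProbabilityMeasure (Ed d) | MemP2 K (μ : Measure (Ed d))}.Nonempty := by
  obtain ⟨x, hx⟩ := hK
  refine ⟨⟨Measure.dirac x, inferInstance⟩, Measure.dirac.isProbabilityMeasure, by simp [hx], ?_⟩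
  simp [FiniteSecondMoment]

theorem MemP2.nonempty {μ : Measure (Ed d)} (hμ : MemP2 K μ) : K.Nonempty := by
  obtain ⟨hprob, hsupp, -⟩ := hμ
  rw [Set.nonempty_iff_ne_empty]
  rintro rfl
  simp at hsupp

end MemP2

section SlicedWassersteinFunctional

variable {d : ℕ} {ν : ProbabilityMeasure (Ed d)}

theorem convexOnMixtures_toReal_SW2sq (hν : FiniteSecondMoment (ν : Measure (Ed d))) :
    ConvexOnMixtures {μ : ProbabilityMeasure (Ed d) | FiniteSecondMoment (μ : Measure (Ed d))}
      fun μ ↦ (SW2sq (μ : Measure (Ed d)) ν).toReal := by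
  intro t _ ht₁ μ hμ μ' hμ' σ hσ
  have hμν := mul_ne_top (coe_ne_top (r := t)) (SW2sq_ne_top hμ hν)
  have hμ'ν := mul_ne_top (coe_ne_top (r := 1 - t)) (SW2sq_ne_top hμ' hν)
  have hν_split : t • (ν : Measure (Ed d)) + (1 - t) • (ν : Measure (Ed d)) = ν := by
    rw [← add_smul, add_tsub_cancel_of_le ht₁.le, one_smul]
  have hle := SW2sq_smul_add_smul_le t (1 - t) μ μ' ν ν
  rw [← hσ, hν_split] at hle
  have hle_real := toReal_mono (add_ne_top.2 ⟨hμν, hμ'ν⟩) hle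
  rwa [toReal_add hμν hμ'ν, toReal_mul, toReal_mul, coe_toReal, coe_toReal,
    NNReal.coe_sub ht₁.le, NNReal.coe_one] at hle_real

theorem lowerSemicontinuousOn_toReal_SW2sq (hν : FiniteSecondMoment (ν : Measure (Ed d))) :
    LowerSemicontinuousOn
      (fun μ : ProbabilityMeasure (Ed d) ↦ (SW2sq (μ : Measure (Ed d)) ν).toReal)
      {μ | FiniteSecondMoment (μ : Measure (Ed d))} :=
  lowerSemicontinuousOn_toReal
    ((lowerSemicontinuous_SW2sq.comp (Continuous.prodMk_left ν)).lowerSemicontinuousOn _)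
    fun _ hμ ↦ SW2sq_ne_top hμ hν

end SlicedWassersteinFunctional

theorem swjko_step_unique_minimizer_of_strictly_convex_general {d : ℕ} {K : Set (Ed d)}
    (hK : IsCompact K) (hKne : K.Nonempty) {F : ProbabilityMeasure (Ed d) → ℝ}
    (hFlsc : LowerSemicontinuousOn F {μ : ProbabilityMeasure (Ed d) | MemP2 K μ.toMeasure})
    (hFsconv : StrictConvexOnMixtures {μ : ProbabilityMeasure (Ed d) | MemP2 K μ.toMeasure} F)
    {τ : ℝ} (hτ : 0 < τ)
    {μk : ProbabilityMeasure (Ed d)} (hμk : FiniteSecondMoment μk.toMeasure) :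
    ∃! μ : ProbabilityMeasure (Ed d), MemP2 K μ.toMeasure ∧
      ∀ ν : ProbabilityMeasure (Ed d), MemP2 K ν.toMeasure →
        (SW2sq μ.toMeasure μk.toMeasure).toReal / (2 * τ) + F μ ≤
          (SW2sq ν.toMeasure μk.toMeasure).toReal / (2 * τ) + F ν := by
  have hsub : {μ : ProbabilityMeasure (Ed d) | MemP2 K μ.toMeasure} ⊆
      {μ | FiniteSecondMoment μ.toMeasure} := fun _ hμ ↦ hμ.2.2
  have hsconv := (((convexOnMixtures_toReal_SW2sq hμk).mono hsub).div_const
    (c := 2 * τ) (by positivity)).add_strictConvexOnMixtures hFsconv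
  have hlsc := ((continuous_id.div_const (2 * τ)).comp_lowerSemicontinuousOn
    ((lowerSemicontinuousOn_toReal_SW2sq hμk).mono hsub)
    (monotone_id.div_const (by positivity))).add hFlsc
  exact hsconv.existsUnique_isMinOn (closedUnderMixtures_setOf_memP2 K)
    (isCompact_setOf_memP2 hK) (setOf_memP2_nonempty hKne) hlsc

/-- For K compact, F lower semicontinuous and strictly convex, τ > 0 and
μ_k ∈ P_2(K), the SW-JKO step has a unique minimizer over P_2(K). -/
theorem swjko_step_unique_minimizer_of_strictly_convex (d : ℕ) (K : Set (Ed d))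
    (hK : IsCompact K)
    (F : ProbabilityMeasure (Ed d) → ℝ)
    (hFlsc : LowerSemicontinuousOn F {μ : ProbabilityMeasure (Ed d) | MemP2 K μ.toMeasure})
    (hFsconv : ∀ (t : ℝ≥0), 0 < t → t < 1 → ∀ μ ν σ : ProbabilityMeasure (Ed d), μ ≠ ν →
      σ.toMeasure = t • μ.toMeasure + (1 - t) • ν.toMeasure →
      F σ < (t : ℝ) * F μ + (1 - (t : ℝ)) * F ν)
    (τ : ℝ) (hτ : 0 < τ)
    (μk : ProbabilityMeasure (Ed d)) (hμk : MemP2 K μk.toMeasure) :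
    ∃! μ : ProbabilityMeasure (Ed d), MemP2 K μ.toMeasure ∧
      ∀ ν : ProbabilityMeasure (Ed d), MemP2 K ν.toMeasure →
        (SW2sq μ.toMeasure μk.toMeasure).toReal / (2 * τ) + F μ ≤
          (SW2sq ν.toMeasure μk.toMeasure).toReal / (2 * τ) + F ν := by
  exact swjko_step_unique_minimizer_of_strictly_convex_general hK hμk.nonempty hFlsc
    (fun t ht₀ ht₁ μ _ ν _ ↦ hFsconv t ht₀ ht₁ μ ν) hτ hμk.2.2
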